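/- Let G be a finite group, n a positive integer, π : G → GL(ℂⁿ) a unitary representation, and Ω ⊆ G a sampling set of size m ≥ 1, and suppose C > 0 satisfies: for every y ∈ ℂⁿ and every coordinate j, Σ_{ω∈Ω} |(π(ω)y)_j|² ≤ C·‖y‖₂². Let s ≤ n, D_{s,n} = {x ∈ ℂⁿ : ‖x‖₂ ≤ 1, ‖x‖₀ ≤ s}, and 𝒜 = {A_x : x ∈ D_{s,n}} where A_x ∈ ℂ^{m×n} has row (1/√m)·(π(ω)*x)* for ω ∈ Ω. Then for every t > 0 there exists a finite set 𝒩 ⊆ ℂ^{m×n} with |𝒩| ≤ (1 + 2·√(s·C/m)/t)^{2s}·(e·n/s)^s such that for every A ∈ 𝒜 there is A' ∈ 𝒩 with ‖A − A'‖_{2→2} ≤ t. -/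

import Mathlib

/-!
The set `D` of `s`-sparse vectors of norm at most one is the union of the unit balls of the
`n.choose s` coordinate subspaces `V_S`, `#S = s`. By Cauchy-Schwarz on `S` and the bound on the
coordinates of `π(ω)y`, the additive map `x ↦ A_x` is `√(sC/m)`-Lipschitz on each `V_S`. As `V_S`
has real dimension `2s`, a volume comparison gives its unit ball a `t/√(sC/m)`-net with at most
`(1 + 2√(sC/m)/t)^(2s)` points. The images of these nets together cover `{A_x : x ∈ D}`, and
`n.choose s ≤ (en/s)^s`.
-/

open scoped ComplexConjugate

/-- The ℓ²-norm of a finitely supported complex vector. -/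
noncomputable def l2norm {ι : Type*} [Fintype ι] (v : ι → ℂ) : ℝ :=
  Real.sqrt (∑ i, ‖v i‖ ^ 2)

/-- Number of nonzero entries of a vector. -/
noncomputable def sparsity {n : ℕ} (x : Fin n → ℂ) : ℕ :=
  (Set.toFinite (Function.support x)).toFinset.card

/-- The ℓ²→ℓ² operator norm of a complex matrix. -/
noncomputable def opNorm22 {ι κ : Type*} [Fintype ι] [Fintype κ] (A : Matrix ι κ ℂ) : ℝ :=
  sSup {r : ℝ | ∃ z : κ → ℂ, l2norm z ≤ 1 ∧ r = l2norm (A.mulVec z)}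

/-- The matrix `A_x = (1/√m) · R_Ω (π(g)* x)*_{g∈G}`, whose row indexed by `ω ∈ Ω`
is `(1/√m)` times the conjugate transpose of `π(ω)* x`. -/
noncomputable def Amat {G : Type*} [Group G] [Fintype G] {n : ℕ}
    (π : G →* Matrix.unitaryGroup (Fin n) ℂ) (Ω : Finset G) (x : Fin n → ℂ) :
    Matrix ↥Ω (Fin n) ℂ :=
  fun ω j =>
    (1 / (Real.sqrt Ω.card : ℂ)) *
      conj ((((π (ω : G) : Matrix (Fin n) (Fin n) ℂ)).conjTranspose.mulVec x) j)

open Metric MeasureTheory Module WithLp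
open scoped NNReal ENNReal Matrix Matrix.Norms.L2Operator

section Covering

variable {E F : Type*} [NormedAddCommGroup E] [NormedSpace ℝ E] [SeminormedAddCommGroup F]

theorem card_le_of_isSeparated_of_subset_closedBall [FiniteDimensional ℝ E] {x : E} {R ε : ℝ≥0}
    (hε : 0 < ε) {s : Finset E} (hs : (s : Set E) ⊆ closedBall x R)
    (hsep : IsSeparated ε (s : Set E)) :
    (s.card : ℝ) ≤ (1 + 2 * R / ε) ^ finrank ℝ E := by
  borelize E
  let μ : Measure E := Measure.addHaar
  have hdisj : (s : Set E).PairwiseDisjoint fun c ↦ closedBall c (ε / 2 : ℝ) := by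
    intro c hc d hd hcd
    refine closedBall_disjoint_closedBall ?_
    rw [add_halves]
    have hlt : (ε : ℝ≥0∞) < edist c d := hsep hc hd hcd
    rwa [edist_nndist, ENNReal.coe_lt_coe] at hlt
  have hsub : ⋃ c ∈ s, closedBall c (ε / 2 : ℝ) ⊆ closedBall x (R + ε / 2) :=
    Set.iUnion₂_subset fun c hc ↦ closedBall_subset_closedBall' <| by
      have := mem_closedBall.1 (hs hc)
      linarith
  have hvol : s.card * (ε / 2 : ℝ) ^ finrank ℝ E * μ.real (ball 0 1) ≤
      (R + ε / 2 : ℝ) ^ finrank ℝ E * μ.real (ball 0 1) :=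
    calc s.card * (ε / 2 : ℝ) ^ finrank ℝ E * μ.real (ball 0 1)
        = μ.real (⋃ c ∈ s, closedBall c (ε / 2 : ℝ)) := by
          rw [measureReal_biUnion_finset hdisj (fun c _ ↦ measurableSet_closedBall)
              fun c _ ↦ measure_closedBall_lt_top.ne,
            Finset.sum_congr rfl fun c _ ↦ μ.addHaar_real_closedBall c (by positivity),
            Finset.sum_const, nsmul_eq_mul, mul_assoc]
      _ ≤ μ.real (closedBall x (R + ε / 2)) := measureReal_mono hsub measure_closedBall_lt_top.ne
      _ = (R + ε / 2 : ℝ) ^ finrank ℝ E * μ.real (ball 0 1) :=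
          μ.addHaar_real_closedBall x (by positivity)
  have hball : 0 < μ.real (ball (0 : E) 1) :=
    ENNReal.toReal_pos (measure_ball_pos μ 0 one_pos).ne' measure_ball_lt_top.ne
  have hratio : (1 + 2 * R / ε : ℝ) = (R + ε / 2) / (ε / 2) := by
    field_simp
    ring
  rw [hratio, div_pow, le_div_iff₀ (by positivity)]
  exact le_of_mul_le_mul_right hvol hball

theorem packingNumber_ne_top_of_isCompact {X : Type*} [PseudoEMetricSpace X] {A : Set X}
    (hA : IsCompact A) {ε : ℝ≥0} (hε : ε ≠ 0) : packingNumber ε A ≠ ⊤ := by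
  obtain ⟨N, -, hfin, hcover⟩ := exists_finite_isCover_of_isCompact (half_pos hε.bot_lt).ne' hA
  refine ne_top_of_le_ne_top hfin.encard_lt_top.ne ?_
  calc packingNumber ε A = packingNumber (2 * (ε / 2)) A := by rw [mul_div_cancel₀ ε two_ne_zero]
    _ ≤ externalCoveringNumber (ε / 2) A := packingNumber_two_mul_le_externalCoveringNumber _ _
    _ ≤ N.encard := hcover.externalCoveringNumber_le_encard

theorem exists_finset_isCover_closedBall [FiniteDimensional ℝ E] (x : E) (R : ℝ≥0) {ε : ℝ≥0}
    (hε : 0 < ε) :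
    ∃ N : Finset E, (N.card : ℝ) ≤ (1 + 2 * R / ε) ^ finrank ℝ E ∧
      IsCover ε (closedBall x R) (N : Set E) := by
  have : ProperSpace E := FiniteDimensional.proper_real E
  have hfinite := packingNumber_ne_top_of_isCompact (isCompact_closedBall x R) hε.ne'
  lift maximalSeparatedSet ε (closedBall x R) to Finset E using
    Set.encard_ne_top_iff.1 (encard_maximalSeparatedSet hfinite ▸ hfinite) with N hN
  exact ⟨N, card_le_of_isSeparated_of_subset_closedBall hε
    (hN ▸ maximalSeparatedSet_subset) (hN ▸ isSeparated_maximalSeparatedSet),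
    hN ▸ isCover_maximalSeparatedSet hfinite⟩

theorem exists_finset_isCover_image_closedBall [FiniteDimensional ℝ E] (T : E →+ F) {L t : ℝ≥0}
    (hL : 0 < L) (ht : 0 < t) (hT : ∀ x, ‖T x‖ ≤ L * ‖x‖) :
    ∃ N : Finset F, (N.card : ℝ) ≤ (1 + 2 * L / t) ^ finrank ℝ E ∧
      IsCover t (T '' closedBall 0 1) (N : Set F) := by
  classical
  obtain ⟨N, hcard, hcover⟩ := exists_finset_isCover_closedBall (0 : E) 1 (div_pos ht hL)
  refine ⟨N.image T, ?_, ?_⟩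
  · calc ((N.image T).card : ℝ) ≤ N.card := mod_cast Finset.card_image_le
      _ ≤ _ := hcard
      _ = (1 + 2 * L / t) ^ finrank ℝ E := by
        push_cast
        field_simp
  · have := hcover.image_lipschitz (AddMonoidHomClass.lipschitz_of_bound_nnnorm T L hT)
    simpa [mul_div_cancel₀ t hL.ne'] using this

theorem exists_finset_isCover_image_biUnion_submodule {σ : Type*} (I : Finset σ)
    (V : σ → Submodule ℝ E) [∀ i, FiniteDimensional ℝ (V i)] {d : ℕ}
    (hd : ∀ i ∈ I, finrank ℝ (V i) ≤ d) (T : E →+ F) {L t : ℝ≥0} (hL : 0 < L) (ht : 0 < t)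
    (hT : ∀ i ∈ I, ∀ x ∈ V i, ‖T x‖ ≤ L * ‖x‖) :
    ∃ N : Finset F, (N.card : ℝ) ≤ I.card * (1 + 2 * L / t) ^ d ∧
      IsCover t (T '' ⋃ i ∈ I, closedBall 0 1 ∩ V i) (N : Set F) := by
  classical
  have hnet : ∀ i ∈ I, ∃ N : Finset F, (N.card : ℝ) ≤ (1 + 2 * L / t) ^ d ∧
      IsCover t (T '' (closedBall 0 1 ∩ V i)) (N : Set F) := by
    intro i hi
    obtain ⟨N, hcard, hcover⟩ := exists_finset_isCover_image_closedBall
      (T.comp (V i).subtype.toAddMonoidHom) hL ht fun x ↦ hT i hi x x.2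
    refine ⟨N, hcard.trans (pow_le_pow_right₀ (le_add_of_nonneg_right (by positivity)) (hd i hi)),
      hcover.anti ?_⟩
    rintro _ ⟨x, ⟨hx, hxV⟩, rfl⟩
    exact ⟨⟨x, hxV⟩, by simpa using hx, rfl⟩
  choose! N hcard hcover using hnet
  refine ⟨I.biUnion N, ?_, ?_⟩
  · calc ((I.biUnion N).card : ℝ) ≤ ∑ i ∈ I, ((N i).card : ℝ) := mod_cast Finset.card_biUnion_le
      _ ≤ I.card * (1 + 2 * L / t) ^ d := by
        simpa using Finset.sum_le_card_nsmul I _ _ hcard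
  · rintro _ ⟨x, hx, rfl⟩
    obtain ⟨i, hi, hxi⟩ := Set.mem_iUnion₂.1 hx
    exact ((hcover i hi).mono (Finset.coe_subset.2 (Finset.subset_biUnion_of_mem N hi)))
      ⟨x, hxi, rfl⟩

end Covering

section Sparse

variable {κ : Type*}

/-- The vectors of `ℂ^κ` whose coordinates outside `S` vanish. -/
def coordSubspace (S : Finset κ) : Submodule ℂ (EuclideanSpace ℂ κ) where
  carrier := {x | ∀ k ∉ S, x k = 0}
  add_mem' hx hy k hk := by simp [hx k hk, hy k hk]
  zero_mem' _ _ := rfl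
  smul_mem' c x hx k hk := by simp [hx k hk]

theorem finrank_coordSubspace_le (S : Finset κ) : finrank ℂ (coordSubspace S) ≤ S.card := by
  let restrict : coordSubspace S →ₗ[ℂ] S → ℂ :=
    { toFun := fun x k ↦ x.1 k, map_add' := fun _ _ ↦ rfl, map_smul' := fun _ _ ↦ rfl }
  have hinj : Function.Injective restrict := by
    intro x y hxy
    ext k
    by_cases hk : k ∈ S
    · exact congrFun hxy ⟨k, hk⟩
    · rw [x.2 k hk, y.2 k hk]
  simpa using restrict.finrank_le_finrank_of_injective hinj

variable [Fintype κ]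

theorem norm_inner_sq_le_of_mem_coordSubspace {S : Finset κ} {x : EuclideanSpace ℂ κ}
    (hx : x ∈ coordSubspace S) (y : EuclideanSpace ℂ κ) :
    ‖inner ℂ x y‖ ^ 2 ≤ ‖x‖ ^ 2 * ∑ k ∈ S, ‖y k‖ ^ 2 := by
  have hinner : inner ℂ x y = ∑ k ∈ S, inner ℂ (x k) (y k) := by
    rw [PiLp.inner_apply]
    exact (Finset.sum_subset S.subset_univ fun k _ hk ↦ by rw [hx k hk, inner_zero_left]).symm
  calc ‖inner ℂ x y‖ ^ 2 ≤ (∑ k ∈ S, ‖x k‖ * ‖y k‖) ^ 2 := by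
        rw [hinner]
        gcongr
        exact norm_sum_le_of_le _ fun k _ ↦ norm_inner_le_norm _ _
    _ ≤ (∑ k ∈ S, ‖x k‖ ^ 2) * ∑ k ∈ S, ‖y k‖ ^ 2 := Finset.sum_mul_sq_le_sq_mul_sq _ _ _
    _ ≤ ‖x‖ ^ 2 * ∑ k ∈ S, ‖y k‖ ^ 2 := by
        rw [EuclideanSpace.norm_sq_eq]
        gcongr
        exact S.subset_univ

variable (κ) in
/-- The set `D_{s,n}` of `s`-sparse vectors of Euclidean norm at most one, with coordinates indexed
by `κ` instead of `{1, …, n}`. -/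
def sparseUnitBall (s : ℕ) : Set (EuclideanSpace ℂ κ) :=
  {x | ‖x‖ ≤ 1 ∧ (Function.support x).ncard ≤ s}

theorem sparseUnitBall_subset_biUnion_coordSubspace {s : ℕ} (hs : s ≤ Fintype.card κ) :
    sparseUnitBall κ s ⊆
      ⋃ S ∈ Finset.powersetCard s (Finset.univ : Finset κ),
        closedBall 0 1 ∩ (coordSubspace S : Set (EuclideanSpace ℂ κ)) := by
  rintro x ⟨hx, hsparse⟩
  rw [Set.ncard_eq_toFinset_card] at hsparse
  obtain ⟨S, hsupp, hS⟩ := Finset.exists_superset_card_eq hsparse hs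
  have hxS : x ∈ coordSubspace S := fun k hk ↦ by
    by_contra h
    exact hk (hsupp (by simpa using h))
  exact Set.mem_biUnion (Finset.mem_powersetCard_univ.2 hS) ⟨mem_closedBall_zero_iff.2 hx, hxS⟩

theorem exists_finset_isCover_image_sparseUnitBall {F : Type*} [SeminormedAddCommGroup F] {s : ℕ}
    (hs : s ≤ Fintype.card κ) (T : EuclideanSpace ℂ κ →+ F) {L t : ℝ≥0} (hL : 0 < L) (ht : 0 < t)
    (hT : ∀ S : Finset κ, S.card = s → ∀ x ∈ coordSubspace S, ‖T x‖ ≤ L * ‖x‖) :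
    ∃ N : Finset F,
      (N.card : ℝ) ≤ (Fintype.card κ).choose s * (1 + 2 * L / t) ^ (2 * s) ∧
      IsCover t (T '' sparseUnitBall κ s) (N : Set F) := by
  have hdim : ∀ S ∈ Finset.powersetCard s (Finset.univ : Finset κ),
      finrank ℝ ((coordSubspace S).restrictScalars ℝ) ≤ 2 * s := by
    intro S hS
    rw [← Finset.mem_powersetCard_univ.1 hS]
    exact (finrank_real_of_complex (coordSubspace S)).trans_le
      (Nat.mul_le_mul_left 2 (finrank_coordSubspace_le S))
  have hbound : ∀ S ∈ Finset.powersetCard s (Finset.univ : Finset κ),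
      ∀ x ∈ (coordSubspace S).restrictScalars ℝ, ‖T x‖ ≤ L * ‖x‖ := fun S hS ↦
    hT S (Finset.mem_powersetCard_univ.1 hS)
  obtain ⟨N, hcard, hcover⟩ :=
    exists_finset_isCover_image_biUnion_submodule _ _ hdim T hL ht hbound
  rw [Finset.card_powersetCard, Finset.card_univ] at hcard
  exact ⟨N, hcard, hcover.anti (Set.image_mono (sparseUnitBall_subset_biUnion_coordSubspace hs))⟩

end Sparse

theorem choose_le_exp_one_mul_div_pow (n s : ℕ) :
    (n.choose s : ℝ) ≤ (Real.exp 1 * n / s) ^ s :=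
  calc (n.choose s : ℝ) ≤ n ^ s / s.factorial := Nat.choose_le_pow_div s n
    _ = n ^ s / s ^ s * (s ^ s / s.factorial) := by field_simp
    _ ≤ n ^ s / s ^ s * Real.exp s := by
        gcongr
        exact Real.pow_div_factorial_le_exp _ s.cast_nonneg s
    _ = (Real.exp 1 * n / s) ^ s := by
        rw [← Real.exp_one_pow, div_pow, mul_pow]
        ring

theorem l2norm_eq_norm_toLp {ι : Type*} [Fintype ι] (v : ι → ℂ) : l2norm v = ‖toLp 2 v‖ :=
  (EuclideanSpace.norm_eq (toLp 2 v)).symm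

theorem opNorm22_le_norm {ι κ : Type*} [Fintype ι] [Fintype κ] [DecidableEq κ]
    (A : Matrix ι κ ℂ) : opNorm22 A ≤ ‖A‖ := by
  refine Real.sSup_le ?_ (norm_nonneg A)
  rintro _ ⟨z, hz, rfl⟩
  rw [l2norm_eq_norm_toLp] at hz ⊢
  exact (A.l2_opNorm_mulVec (toLp 2 z)).trans (mul_le_of_le_one_right (norm_nonneg A) hz)

theorem sparsity_eq_ncard_support {n : ℕ} (x : Fin n → ℂ) :
    sparsity x = (Function.support x).ncard :=
  (Set.ncard_eq_toFinset_card _ _).symm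

section SampleMatrix

variable {ι κ κ' : Type*} [Fintype ι] [Fintype κ] [Fintype κ']

/-- The analogue of `x ↦ A_x` for an arbitrary finite family `U` of matrices in place of the
unitaries `π(ω)`, `ω ∈ Ω`, as an additive map (it is conjugate-linear in `x`). -/
noncomputable def sampleMatrix (U : ι → Matrix κ κ' ℂ) :
    EuclideanSpace ℂ κ →+ Matrix ι κ' ℂ where
  toFun x := Matrix.of fun ω j ↦ 1 / (Real.sqrt (Fintype.card ι) : ℂ) * conj (((U ω)ᴴ *ᵥ x) j)
  map_zero' := by ext; simp
  map_add' x y := by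
    ext
    simp only [ofLp_add, Matrix.mulVec_add, Pi.add_apply, map_add, mul_add, Matrix.add_apply,
      Matrix.of_apply]

theorem sampleMatrix_mulVec_apply (U : ι → Matrix κ κ' ℂ) (x : EuclideanSpace ℂ κ) (z : κ' → ℂ)
    (ω : ι) :
    (sampleMatrix U x *ᵥ z) ω =
      1 / (Real.sqrt (Fintype.card ι) : ℂ) * inner ℂ x (toLp 2 (U ω *ᵥ z)) := by
  have hrow : sampleMatrix U x ω =
      (1 / (Real.sqrt (Fintype.card ι) : ℂ)) • star ((U ω)ᴴ *ᵥ x) := rfl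
  rw [Matrix.mulVec, hrow, smul_dotProduct, Matrix.star_mulVec, Matrix.conjTranspose_conjTranspose,
    ← Matrix.dotProduct_mulVec, dotProduct_comm, smul_eq_mul,
    EuclideanSpace.inner_eq_star_dotProduct]

theorem norm_sampleMatrix_le [DecidableEq κ'] (U : ι → Matrix κ κ' ℂ) {C : ℝ} (hC0 : 0 ≤ C)
    (hC : ∀ (y : κ' → ℂ) (k : κ), ∑ ω, ‖(U ω *ᵥ y) k‖ ^ 2 ≤ C * ‖toLp 2 y‖ ^ 2)
    {S : Finset κ} {x : EuclideanSpace ℂ κ} (hx : x ∈ coordSubspace S) :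
    ‖sampleMatrix U x‖ ≤ Real.sqrt (S.card * C / Fintype.card ι) * ‖x‖ := by
  rw [Matrix.l2_opNorm_def]
  refine ContinuousLinearMap.opNorm_le_bound _ (by positivity) fun z ↦ ?_
  refine le_of_sq_le_sq ?_ (by positivity)
  have hrow (ω : ι) : ‖(sampleMatrix U x *ᵥ z) ω‖ ^ 2 ≤
      1 / Fintype.card ι * (‖x‖ ^ 2 * ∑ k ∈ S, ‖(U ω *ᵥ z) k‖ ^ 2) := by
    rw [sampleMatrix_mulVec_apply, norm_mul, mul_pow]
    gcongr
    · simp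
    · exact norm_inner_sq_le_of_mem_coordSubspace hx _
  calc ‖toLp 2 (sampleMatrix U x *ᵥ z)‖ ^ 2
      = ∑ ω, ‖(sampleMatrix U x *ᵥ z) ω‖ ^ 2 := EuclideanSpace.norm_sq_eq _
    _ ≤ ∑ ω, 1 / Fintype.card ι * (‖x‖ ^ 2 * ∑ k ∈ S, ‖(U ω *ᵥ z) k‖ ^ 2) :=
        Finset.sum_le_sum fun ω _ ↦ hrow ω
    _ = 1 / Fintype.card ι * (‖x‖ ^ 2 * ∑ k ∈ S, ∑ ω, ‖(U ω *ᵥ z) k‖ ^ 2) := by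
        rw [← Finset.mul_sum, ← Finset.mul_sum, Finset.sum_comm]
    _ ≤ 1 / Fintype.card ι * (‖x‖ ^ 2 * ∑ k ∈ S, C * ‖z‖ ^ 2) := by
        gcongr with k
        exact hC z k
    _ = (Real.sqrt (S.card * C / Fintype.card ι) * ‖x‖ * ‖z‖) ^ 2 := by
        rw [mul_pow, mul_pow, Real.sq_sqrt (by positivity), Finset.sum_const, nsmul_eq_mul]
        ring

end SampleMatrix

theorem amat_eq_sampleMatrix {G : Type*} [Group G] [Fintype G] {n : ℕ}
    (π : G →* Matrix.unitaryGroup (Fin n) ℂ) (Ω : Finset G) (x : Fin n → ℂ) :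
    Amat π Ω x = sampleMatrix (fun ω : Ω ↦ (π ω : Matrix (Fin n) (Fin n) ℂ)) (toLp 2 x) := by
  ext
  simp [Amat, sampleMatrix]

theorem stmt9_general {ι κ : Type*} [Fintype ι] [Nonempty ι] [Fintype κ] {n s : ℕ}
    (U : ι → Matrix (Fin n) κ ℂ) {C : ℝ} (hCpos : 0 < C)
    (hC : ∀ (y : κ → ℂ) (j : Fin n), ∑ ω, ‖(U ω *ᵥ y) j‖ ^ 2 ≤ C * l2norm y ^ 2)
    (hs : 1 ≤ s) (hsn : s ≤ n) {t : ℝ} (ht : 0 < t) :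
    ∃ 𝒩 : Finset (Matrix ι κ ℂ),
      (𝒩.card : ℝ) ≤ (1 + 2 * Real.sqrt (s * C / Fintype.card ι) / t) ^ (2 * s) *
          (Real.exp 1 * n / s) ^ s ∧
      ∀ x : Fin n → ℂ, l2norm x ≤ 1 → sparsity x ≤ s →
        ∃ A' ∈ 𝒩, opNorm22 (sampleMatrix U (toLp 2 x) - A') ≤ t := by
  classical
  simp only [l2norm_eq_norm_toLp, sparsity_eq_ncard_support] at hC ⊢
  lift t to ℝ≥0 using ht.le
  let L : ℝ≥0 := ⟨Real.sqrt (s * C / Fintype.card ι), Real.sqrt_nonneg _⟩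
  have hL : 0 < L := Real.sqrt_pos.2 (by positivity)
  obtain ⟨𝒩, hcard, hcover⟩ := exists_finset_isCover_image_sparseUnitBall
    (hsn.trans_eq (Fintype.card_fin n).symm) (sampleMatrix U) hL ht fun S hS x hx ↦ by
      exact (norm_sampleMatrix_le U hCpos.le hC hx).trans_eq (by rw [hS]; rfl)
  refine ⟨𝒩, ?_, fun x hx hsparse ↦ ?_⟩
  · calc (𝒩.card : ℝ) ≤ _ := hcard
      _ ≤ _ := by
        rw [Fintype.card_fin, mul_comm]
        exact mul_le_mul_of_nonneg_left (choose_le_exp_one_mul_div_pow n s) (by positivity)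
  · obtain ⟨A', hA', hdist⟩ := Set.mem_iUnion₂.1 <|
      hcover.subset_iUnion_closedBall ⟨toLp 2 x, ⟨hx, hsparse⟩, rfl⟩
    exact ⟨A', hA', (opNorm22_le_norm _).trans (mem_closedBall_iff_norm.1 hdist)⟩

theorem stmt9 {G : Type*} [Group G] [Fintype G] {n m s : ℕ} (hn : 1 ≤ n)
    (π : G →* Matrix.unitaryGroup (Fin n) ℂ) (Ω : Finset G)
    (hm : Ω.card = m) (hm1 : 1 ≤ m)
    (C : ℝ) (hCpos : 0 < C)
    (hC : ∀ (y : Fin n → ℂ) (j : Fin n),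
      ∑ ω ∈ Ω, ‖((π ω : Matrix (Fin n) (Fin n) ℂ).mulVec y) j‖ ^ 2 ≤ C * (l2norm y) ^ 2)
    (hs : 1 ≤ s) (hsn : s ≤ n) (t : ℝ) (ht : 0 < t) :
    ∃ 𝒩 : Finset (Matrix ↥Ω (Fin n) ℂ),
      (𝒩.card : ℝ) ≤ (1 + 2 * Real.sqrt (s * C / m) / t) ^ (2 * s) *
          (Real.exp 1 * n / s) ^ s ∧
      ∀ x : Fin n → ℂ, l2norm x ≤ 1 → sparsity x ≤ s →
        ∃ A' ∈ 𝒩, opNorm22 (Amat π Ω x - A') ≤ t := by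
  subst hm
  have : Nonempty Ω := (Finset.card_pos.1 hm1).coe_sort
  simpa only [amat_eq_sampleMatrix, Fintype.card_coe] using
    stmt9_general (fun ω : Ω ↦ (π ω : Matrix (Fin n) (Fin n) ℂ)) hCpos (fun y j ↦
      (Finset.sum_coe_sort Ω fun ω ↦ ‖((π ω : Matrix _ _ ℂ) *ᵥ y) j‖ ^ 2).trans_le (hC y j))
      hs hsn ht
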